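/- Suppose that p = p(n) satisfies pn ≫ log n. Then for each vertex v of G(n,p), asymptotically almost surely pt_pzf(G(n,p), v) ≥ (1+o(1)) max( log₂ log₂ n , log₄(1/p) ). -/

import Mathlib

open Finset Filter Real
open scoped Classical

namespace PZF

variable {V : Type*} [Fintype V] [DecidableEq V]

/-- The closed degree of `u` into the set `B`, i.e. `|N[u] ∩ B|`. -/
noncomputable def closedDegIn (G : SimpleGraph V) (B : Finset V) (u : V) : ℕ :=
  ((insert u (G.neighborSet u)) ∩ (B : Set V)).ncard

/-- The degree of `u` in `G`. -/
noncomputable def deg (G : SimpleGraph V) (u : V) : ℕ :=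
  (G.neighborSet u).ncard

/-- The probability that the blue vertex `u` forces its white neighbour `v` in one round of
probabilistic zero forcing, when the current blue set is `B`: it equals `|N[u] ∩ B| / deg u`
when `u` is blue, `v` is a white neighbour of `u`, and `0` otherwise. -/
noncomputable def edgeForceProb (G : SimpleGraph V) (B : Finset V) (u v : V) : ℝ :=
  if G.Adj u v ∧ u ∈ B ∧ v ∉ B then (closedDegIn G B u : ℝ) / (deg G u : ℝ) else 0

/-- Given per-ordered-pair forcing probabilities `q u v` (each attempt independent), the
probability that one round starting from the blue set `B` produces exactly the blue set `B'`. -/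
noncomputable def stepOfQ (q : V → V → ℝ) (B B' : Finset V) : ℝ :=
  if B ⊆ B' then
    (∏ v ∈ B' \ B, (1 - ∏ u ∈ B, (1 - q u v))) * ∏ v ∈ B'ᶜ, ∏ u ∈ B, (1 - q u v)
  else 0

/-- The transition rule of standard probabilistic zero forcing, as a function of the history
(the list of blue sets so far; only the current blue set matters). -/
noncomputable def stdStep (G : SimpleGraph V) (hist : List (Finset V)) (B' : Finset V) : ℝ :=
  stepOfQ (edgeForceProb G (hist.getLastD ∅)) (hist.getLastD ∅) B'

/-- Probability of a given future trajectory, given the history so far. -/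
noncomputable def seqProbAux (step : List (Finset V) → Finset V → ℝ) :
    List (Finset V) → List (Finset V) → ℝ
  | _, [] => 1
  | hist, B :: rest => step hist B * seqProbAux step (hist ++ [B]) rest

/-- The probability that, running the process given by the transition rule `step` from the
initial blue set `S` for `ℓ` rounds, the resulting trajectory (including the initial set)
satisfies the predicate `E`. -/
noncomputable def trajEventProb (step : List (Finset V) → Finset V → ℝ) (S : Finset V)
    (ℓ : ℕ) (E : List (Finset V) → Prop) : ℝ :=
  ∑ f : Fin ℓ → Finset V,
    if E (S :: List.ofFn f) then seqProbAux step [S] (List.ofFn f) else 0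

/-- `P(A(S,T,ℓ))`: the probability that, starting probabilistic zero forcing from the blue
set `S`, after `ℓ` rounds every vertex of `T` is blue. -/
noncomputable def probForced (G : SimpleGraph V) (S T : Finset V) (ℓ : ℕ) : ℝ :=
  trajEventProb (stdStep G) S ℓ fun traj => T ⊆ traj.getLastD ∅

/-- `P(pt_pzf(G,S) ≤ ℓ)`: the probability that all vertices are blue after `ℓ` rounds. -/
noncomputable def probAllBlue (G : SimpleGraph V) (S : Finset V) (ℓ : ℕ) : ℝ :=
  probForced G S Finset.univ ℓ

/-- The probability of a fixed graph `G` under the Erdős–Rényi measure `G(n,p)`. -/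
noncomputable def erProb (n : ℕ) (p : ℝ) (G : SimpleGraph (Fin n)) : ℝ :=
  p ^ G.edgeSet.ncard * (1 - p) ^ (n.choose 2 - G.edgeSet.ncard)

/-- The probability that `G(n,p)` satisfies the property `E`. -/
noncomputable def graphProb (n : ℕ) (p : ℝ) (E : SimpleGraph (Fin n) → Prop) : ℝ :=
  ∑ G : SimpleGraph (Fin n), if E G then erProb n p G else 0

/-- `P(pt_pzf(G(n,p), v) ≤ ℓ)`: the joint probability (over the random graph and the forcing
randomness) that probabilistic zero forcing started at `{v}` turns all of `G(n,p)` blue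
within `ℓ` rounds. -/
noncomputable def prPZFwithin (n : ℕ) (p : ℝ) (v : Fin n) (ℓ : ℕ) : ℝ :=
  ∑ G : SimpleGraph (Fin n), erProb n p G * probAllBlue G {v} ℓ

end PZF


/-!
The two terms of the maximum come from two independent upper bounds on `P(pt ≤ ℓ)`.

For `log₂ log₂ n`: on every graph, one round from the blue set `B` forces on average at most `|B|²`
new vertices, since a blue `u` performs on average at most `|N[u] ∩ B| ≤ |B|` forces. As
`1 + |B| + |B|² ≤ (1 + |B|)²`, Jensen's inequality gives `E log (1 + |B_t|) ≤ 2 ^ t log 2`.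

For `log₄ (1/p)`: the potential `|B| + 2 e(B)` grows on average over `G(n,p)` by a factor of little
more than `4` per round. Each round adds at most one potential's worth of vertices, and the edge
used for a force adds `2` more; the remaining edges to and between new vertices are rare. Indeed the
law of the process up to the time it reaches `B` depends only on `G[B]` and the degrees on `B`, so
switching the pairs `wv` and `wx` for `v, x ∉ B` shows that `wv` is an edge with conditional
probability at most `deg w / (n - |B| - 2 - deg w)`. This is `O(p)` once degrees are capped at
`D = O(np)` (Chernoff) and the potential is truncated at `s = o(1/p)`, which makes the rare edges
contribute a factor `1 + O(ps)` only, and Markov's inequality applies to the truncated potential.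
-/

namespace PZF

theorem one_sub_prod_one_sub_le_sum {ι : Type*} (s : Finset ι) (f : ι → ℝ)
    (h0 : ∀ i ∈ s, 0 ≤ f i) (h1 : ∀ i ∈ s, f i ≤ 1) :
    1 - ∏ i ∈ s, (1 - f i) ≤ ∑ i ∈ s, f i := by
  induction s using Finset.cons_induction with
  | empty => simp
  | cons a s ha ih =>
    rw [prod_cons, sum_cons]
    have hs := ih (fun i hi => h0 i (mem_cons_of_mem hi)) fun i hi => h1 i (mem_cons_of_mem hi)
    have hprod : ∏ i ∈ s, (1 - f i) ≤ 1 :=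
      prod_le_one (fun i hi => sub_nonneg.2 (h1 i (mem_cons_of_mem hi)))
        fun i hi => sub_le_self _ (h0 i (mem_cons_of_mem hi))
    nlinarith [mul_le_mul_of_nonneg_left hprod (h0 a (mem_cons_self a s))]

theorem sum_superset_prod_mul_prod_compl {V R : Type*} [Fintype V] [DecidableEq V]
    [CommSemiring R] (C : Finset V) (a b : V → R) :
    ∑ B with C ⊆ B, (∏ v ∈ B \ C, a v) * ∏ v ∈ Bᶜ, b v = ∏ v ∈ Cᶜ, (a v + b v) := by
  rw [prod_add]
  refine sum_nbij' (· \ C) (C ∪ ·) ?_ ?_ ?_ ?_ ?_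
  · intro B _
    simp [subset_iff]
  · intro B _
    simp
  · intro B hB
    simp only [mem_filter_univ] at hB
    simp [hB]
  · intro B hB
    rw [mem_powerset, subset_compl_iff_disjoint_right] at hB
    exact union_sdiff_cancel_left hB.symm
  · intro B hB
    simp only [mem_filter_univ] at hB
    have hcompl : Cᶜ \ (B \ C) = Bᶜ := by grind [mem_compl]
    rw [hcompl]

section Round

variable {V : Type*}

/-- The probability that the white vertex `v` turns blue in one round from the blue set `B`, when
each `u ∈ B` forces it independently with probability `q u v`. -/
noncomputable def turnProb (q : V → V → ℝ) (B : Finset V) (v : V) : ℝ :=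
  1 - ∏ u ∈ B, (1 - q u v)

theorem turnProb_nonneg {q : V → V → ℝ} (hq0 : ∀ u v, 0 ≤ q u v) (hq1 : ∀ u v, q u v ≤ 1)
    (B : Finset V) (v : V) : 0 ≤ turnProb q B v :=
  sub_nonneg.2 <| prod_le_one (fun u _ => sub_nonneg.2 (hq1 u v)) fun u _ => sub_le_self _ (hq0 u v)

theorem turnProb_le_sum {q : V → V → ℝ} (hq0 : ∀ u v, 0 ≤ q u v) (hq1 : ∀ u v, q u v ≤ 1)
    (B : Finset V) (v : V) : turnProb q B v ≤ ∑ u ∈ B, q u v :=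
  one_sub_prod_one_sub_le_sum B _ (fun u _ => hq0 u v) fun u _ => hq1 u v

variable [Fintype V] [DecidableEq V]

theorem stepOfQ_of_not_subset (q : V → V → ℝ) {B B' : Finset V} (h : ¬B ⊆ B') :
    stepOfQ q B B' = 0 :=
  if_neg h

theorem stepOfQ_nonneg {q : V → V → ℝ} (hq0 : ∀ u v, 0 ≤ q u v) (hq1 : ∀ u v, q u v ≤ 1)
    (B B' : Finset V) : 0 ≤ stepOfQ q B B' := by
  rw [stepOfQ]
  split_ifs
  · exact mul_nonneg (prod_nonneg fun v _ => turnProb_nonneg hq0 hq1 B v)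
      (prod_nonneg fun v _ => prod_nonneg fun u _ => sub_nonneg.2 (hq1 u v))
  · exact le_rfl

theorem sum_stepOfQ_superset (q : V → V → ℝ) (B T : Finset V) :
    ∑ B' with T ⊆ B', stepOfQ q B B' = ∏ v ∈ T \ B, turnProb q B v := by
  have hstep : ∀ B', T ∪ B ⊆ B' → stepOfQ q B B' = (∏ v ∈ T \ B, turnProb q B v) *
      ((∏ v ∈ B' \ (T ∪ B), turnProb q B v) * ∏ v ∈ B'ᶜ, ∏ u ∈ B, (1 - q u v)) := by
    intro B' hB'
    have hsplit : B' \ B = T \ B ∪ B' \ (T ∪ B) := by grind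
    have hdisj : Disjoint (T \ B) (B' \ (T ∪ B)) := by
      rw [Finset.disjoint_left]
      grind
    rw [stepOfQ, if_pos (union_subset_right hB'), hsplit, prod_union hdisj, mul_assoc]
    rfl
  calc ∑ B' with T ⊆ B', stepOfQ q B B'
      = ∑ B' with T ∪ B ⊆ B', stepOfQ q B B' := by
        refine (sum_subset (fun B' => ?_) fun B' _ hB' => ?_).symm
        · simpa using union_subset_left
        · exact stepOfQ_of_not_subset q fun h => hB' (by simp_all [union_subset_iff])
    _ = (∏ v ∈ T \ B, turnProb q B v) * ∏ v ∈ (T ∪ B)ᶜ,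
          (turnProb q B v + ∏ u ∈ B, (1 - q u v)) := by
        rw [← sum_superset_prod_mul_prod_compl, mul_sum]
        exact sum_congr rfl fun B' hB' => hstep B' (by simpa using hB')
    _ = ∏ v ∈ T \ B, turnProb q B v := by simp [turnProb]

theorem sum_stepOfQ (q : V → V → ℝ) (B : Finset V) : ∑ B', stepOfQ q B B' = 1 := by
  simpa using sum_stepOfQ_superset q B ∅

theorem sum_stepOfQ_mul_le {q : V → V → ℝ} (hq0 : ∀ u v, 0 ≤ q u v) (hq1 : ∀ u v, q u v ≤ 1)
    {B : Finset V} {f g : Finset V → ℝ} (hfg : ∀ B', B ⊆ B' → f B' ≤ g B') :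
    ∑ B', stepOfQ q B B' * f B' ≤ ∑ B', stepOfQ q B B' * g B' := by
  refine sum_le_sum fun B' _ => ?_
  by_cases hB : B ⊆ B'
  · exact mul_le_mul_of_nonneg_left (hfg B' hB) (stepOfQ_nonneg hq0 hq1 B B')
  · simp [stepOfQ_of_not_subset q hB]

theorem sum_stepOfQ_mul_sum_sdiff (q : V → V → ℝ) (B : Finset V) (f : V → ℝ) :
    ∑ B', stepOfQ q B B' * ∑ v ∈ B' \ B, f v = ∑ v ∈ Bᶜ, turnProb q B v * f v := by
  have hmem : ∀ v ∈ Bᶜ, turnProb q B v = ∑ B' with v ∈ B', stepOfQ q B B' := by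
    intro v hv
    have := sum_stepOfQ_superset q B {v}
    rw [sdiff_eq_self_of_disjoint (by simpa using hv), prod_singleton] at this
    simpa using this.symm
  calc ∑ B', stepOfQ q B B' * ∑ v ∈ B' \ B, f v
      = ∑ B', ∑ v ∈ Bᶜ, if v ∈ B' then stepOfQ q B B' * f v else 0 := by
        refine sum_congr rfl fun B' _ => ?_
        rw [← sum_filter, mul_sum]
        exact sum_congr (by grind [mem_compl]) fun _ _ => rfl
    _ = ∑ v ∈ Bᶜ, turnProb q B v * f v := by
        rw [sum_comm]
        exact sum_congr rfl fun v hv => by rw [hmem v hv, sum_mul, sum_filter]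

theorem sum_stepOfQ_mul_sum_sum_sdiff (q : V → V → ℝ) (B : Finset V) {f : V → V → ℝ}
    (hf : ∀ v, f v v = 0) :
    ∑ B', stepOfQ q B B' * ∑ v ∈ B' \ B, ∑ w ∈ B' \ B, f v w =
      ∑ v ∈ Bᶜ, ∑ w ∈ Bᶜ, turnProb q B v * turnProb q B w * f v w := by
  have hmem : ∀ v ∈ Bᶜ, ∀ w ∈ Bᶜ, v ≠ w →
      turnProb q B v * turnProb q B w = ∑ B' with v ∈ B' ∧ w ∈ B', stepOfQ q B B' := by
    intro v hv w hw hvw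
    have := sum_stepOfQ_superset q B {v, w}
    rw [sdiff_eq_self_of_disjoint (by simp_all), prod_pair hvw] at this
    simpa [insert_subset_iff] using this.symm
  calc ∑ B', stepOfQ q B B' * ∑ v ∈ B' \ B, ∑ w ∈ B' \ B, f v w
      = ∑ B', ∑ v ∈ Bᶜ, ∑ w ∈ Bᶜ,
          if v ∈ B' ∧ w ∈ B' then stepOfQ q B B' * f v w else 0 := by
        refine sum_congr rfl fun B' _ => ?_
        have hsdiff : B' \ B = {v ∈ Bᶜ | v ∈ B'} := by grind [mem_compl]
        simp only [hsdiff, sum_filter, mul_sum, mul_ite, mul_zero, ite_and]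
        exact sum_congr rfl fun v _ => by split_ifs <;> simp
    _ = ∑ v ∈ Bᶜ, ∑ w ∈ Bᶜ, ∑ B', if v ∈ B' ∧ w ∈ B' then stepOfQ q B B' * f v w else 0 := by
        rw [sum_comm]
        exact sum_congr rfl fun v _ => sum_comm
    _ = ∑ v ∈ Bᶜ, ∑ w ∈ Bᶜ, turnProb q B v * turnProb q B w * f v w := by
        refine sum_congr rfl fun v hv => sum_congr rfl fun w hw => ?_
        rcases eq_or_ne v w with rfl | hvw
        · simp [hf]
        · rw [hmem v hv w hw hvw, sum_mul, sum_filter]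

end Round

section Forcing

variable {V : Type*} (G : SimpleGraph V) (B : Finset V)

theorem adjMatrix_nonneg (u v : V) : 0 ≤ G.adjMatrix ℝ u v := by
  rw [SimpleGraph.adjMatrix_apply]
  split_ifs <;> simp

theorem adjMatrix_comm (u v : V) : G.adjMatrix ℝ u v = G.adjMatrix ℝ v u :=
  (G.isSymm_adjMatrix (α := ℝ)).apply v u

theorem closedDegIn_le_card (u : V) : closedDegIn G B u ≤ #B :=
  (Set.ncard_le_ncard Set.inter_subset_right B.finite_toSet).trans_eq (Set.ncard_coe_finset B)

/-- The sum over the blue vertices of their closed degrees into the blue set `B`, that is `|B|` plus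
twice the number of edges inside `B`. -/
noncomputable def potential : ℝ :=
  ∑ u ∈ B, (closedDegIn G B u : ℝ)

theorem potential_le_card_sq : potential G B ≤ (#B : ℝ) ^ 2 := by
  refine (sum_le_card_nsmul B _ (#B : ℝ) fun u _ => ?_).trans_eq (by rw [nsmul_eq_mul, sq])
  exact_mod_cast closedDegIn_le_card G B u

variable {B}

theorem closedDegIn_eq {u : V} (hu : u ∈ B) :
    (closedDegIn G B u : ℝ) = 1 + ∑ x ∈ B, G.adjMatrix ℝ u x := by
  have hset : insert u (G.neighborSet u) ∩ B =
      ({x ∈ B | G.Adj u x}.cons u (by simp) : Finset V) := by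
    ext x
    rw [coe_cons]
    simp only [Set.mem_inter_iff, Set.mem_insert_iff, SimpleGraph.mem_neighborSet, mem_coe,
      mem_filter]
    exact ⟨fun h => h.1.imp_right fun hx => ⟨h.2, hx⟩,
      fun h => h.elim (fun hx => ⟨.inl hx, hx ▸ hu⟩) fun hx => ⟨.inr hx.2, hx.1⟩⟩
  rw [closedDegIn, hset, Set.ncard_coe_finset, card_cons]
  simp [add_comm, SimpleGraph.adjMatrix_apply]

variable (B)

theorem potential_eq : potential G B = #B + ∑ u ∈ B, ∑ x ∈ B, G.adjMatrix ℝ u x := by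
  rw [potential, sum_congr rfl fun u hu => closedDegIn_eq G hu, sum_add_distrib]
  simp

theorem card_le_potential : (#B : ℝ) ≤ potential G B := by
  rw [potential_eq]
  exact le_add_of_nonneg_right <| sum_nonneg fun u _ => sum_nonneg fun x _ => adjMatrix_nonneg G u x

theorem potential_nonneg : 0 ≤ potential G B :=
  sum_nonneg fun _ _ => Nat.cast_nonneg _

section EdgeForceProb

variable [DecidableEq V]

theorem edgeForceProb_nonneg (u v : V) : 0 ≤ edgeForceProb G B u v := by
  rw [edgeForceProb]
  split_ifs <;> positivity

variable {B} in
theorem edgeForceProb_eq {u v : V} (hu : u ∈ B) (hv : v ∉ B) :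
    edgeForceProb G B u v = closedDegIn G B u / deg G u * G.adjMatrix ℝ u v := by
  simp [edgeForceProb, hu, hv, SimpleGraph.adjMatrix_apply]

theorem edgeForceProb_mul_adjMatrix (u v : V) :
    edgeForceProb G B u v * G.adjMatrix ℝ u v = edgeForceProb G B u v := by
  by_cases h : G.Adj u v <;> simp [edgeForceProb, SimpleGraph.adjMatrix_apply, h]

/-- The expected number of successful forces of the white vertex `v` in one round. -/
noncomputable def forceMean (v : V) : ℝ :=
  ∑ u ∈ B, edgeForceProb G B u v

theorem forceMean_nonneg (v : V) : 0 ≤ forceMean G B v :=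
  sum_nonneg fun u _ => edgeForceProb_nonneg G B u v

end EdgeForceProb

theorem deg_eq_sum [Fintype V] (u : V) : (deg G u : ℝ) = ∑ x, G.adjMatrix ℝ u x := by
  have hset : G.neighborSet u = ({x | G.Adj u x} : Finset V) := by
    ext x
    simp
  rw [deg, hset, Set.ncard_coe_finset]
  simp [SimpleGraph.adjMatrix_apply]

theorem edgeForceProb_le_one [Finite V] [DecidableEq V] (u v : V) : edgeForceProb G B u v ≤ 1 := by
  have := Fintype.ofFinite V
  rw [edgeForceProb]
  split_ifs with h
  · obtain ⟨huv, hu, hv⟩ := h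
    refine div_le_one_of_le₀ ?_ (Nat.cast_nonneg _)
    calc (closedDegIn G B u : ℝ)
        = ∑ x ∈ insert v B, G.adjMatrix ℝ u x := by
          rw [closedDegIn_eq G hu, sum_insert hv, SimpleGraph.adjMatrix_apply, if_pos huv]
      _ ≤ deg G u := by
          rw [deg_eq_sum]
          exact sum_le_univ_sum_of_nonneg fun x => adjMatrix_nonneg G u x
  · exact zero_le_one

theorem turnProb_le_forceMean [Finite V] [DecidableEq V] (v : V) :
    turnProb (edgeForceProb G B) B v ≤ forceMean G B v :=
  turnProb_le_sum (edgeForceProb_nonneg G B) (edgeForceProb_le_one G B) B v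

variable [Fintype V] [DecidableEq V]

theorem sum_compl_edgeForceProb_le (u : V) :
    ∑ v ∈ Bᶜ, edgeForceProb G B u v ≤ closedDegIn G B u := by
  by_cases hu : u ∈ B
  · calc ∑ v ∈ Bᶜ, edgeForceProb G B u v
        = closedDegIn G B u / deg G u * ∑ v ∈ Bᶜ, G.adjMatrix ℝ u v := by
          rw [mul_sum]
          exact sum_congr rfl fun v hv => edgeForceProb_eq G hu (mem_compl.1 hv)
      _ ≤ closedDegIn G B u / deg G u * deg G u := by
          refine mul_le_mul_of_nonneg_left ?_ (by positivity)
          rw [deg_eq_sum]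
          exact sum_le_univ_sum_of_nonneg fun v => adjMatrix_nonneg G u v
      _ ≤ closedDegIn G B u := by
          rw [div_mul_comm]
          exact mul_le_of_le_one_left (Nat.cast_nonneg _) (div_self_le_one _)
  · simp [edgeForceProb, hu]

theorem sum_compl_forceMean_le_potential : ∑ v ∈ Bᶜ, forceMean G B v ≤ potential G B := by
  simp only [forceMean, potential]
  rw [sum_comm]
  exact sum_le_sum fun u _ => sum_compl_edgeForceProb_le G B u

end Forcing

section Law

variable {V : Type*} [Fintype V] [DecidableEq V] (G : SimpleGraph V)

/-- The transition matrix of probabilistic zero forcing, seen as a Markov chain on the blue sets;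
`(transition G ^ t) S B` is the probability that the blue set is `B` after `t` rounds from `S`. -/
noncomputable def transition : Matrix (Finset V) (Finset V) ℝ :=
  .of fun B B' => stepOfQ (edgeForceProb G B) B B'

theorem transition_apply (B B' : Finset V) :
    transition G B B' = stepOfQ (edgeForceProb G B) B B' :=
  rfl

theorem transition_nonneg (B B' : Finset V) : 0 ≤ transition G B B' :=
  stepOfQ_nonneg (edgeForceProb_nonneg G B) (edgeForceProb_le_one G B) B B'

theorem transition_pow_nonneg (t : ℕ) (S B : Finset V) : 0 ≤ (transition G ^ t) S B := by
  induction t generalizing B with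
  | zero =>
    rw [pow_zero, Matrix.one_apply]
    split_ifs <;> simp
  | succ t ih =>
    rw [pow_succ, Matrix.mul_apply]
    exact sum_nonneg fun B' _ => mul_nonneg (ih B') (transition_nonneg G B' B)

theorem sum_transition_pow_succ_mul (t : ℕ) (S : Finset V) (f : Finset V → ℝ) :
    ∑ B', (transition G ^ (t + 1)) S B' * f B' =
      ∑ B, (transition G ^ t) S B * ∑ B', transition G B B' * f B' := by
  simp only [pow_succ, Matrix.mul_apply, sum_mul, mul_sum, mul_assoc]
  exact sum_comm

theorem sum_transition_pow (t : ℕ) (S : Finset V) : ∑ B, (transition G ^ t) S B = 1 := by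
  induction t with
  | zero => simp [Matrix.one_apply]
  | succ t ih => simpa [transition_apply, sum_stepOfQ, ih] using
      sum_transition_pow_succ_mul G t S fun _ => 1

theorem sum_transition_mul_le {B : Finset V} {f g : Finset V → ℝ}
    (hfg : ∀ B', B ⊆ B' → f B' ≤ g B') :
    ∑ B', transition G B B' * f B' ≤ ∑ B', transition G B B' * g B' :=
  sum_stepOfQ_mul_le (edgeForceProb_nonneg G B) (edgeForceProb_le_one G B) hfg

theorem sum_seqProbAux_eq (P : Finset V → Prop) (ℓ : ℕ) (hist : List (Finset V)) :
    (∑ f : Fin ℓ → Finset V, if P ((hist ++ List.ofFn f).getLastD ∅) then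
      seqProbAux (stdStep G) hist (List.ofFn f) else 0) =
      ∑ B with P B, (transition G ^ ℓ) (hist.getLastD ∅) B := by
  induction ℓ generalizing hist with
  | zero => simp [seqProbAux, Matrix.one_apply]
  | succ ℓ ih =>
    rw [← (Fin.consEquiv fun _ => Finset V).sum_comp, Fintype.sum_prod_type]
    simp only [pow_succ', Matrix.mul_apply]
    rw [sum_comm (s := {B | P B})]
    refine sum_congr rfl fun B _ => ?_
    have hlast : (hist ++ [B]).getLastD ∅ = B := by simp
    rw [← mul_sum, ← hlast, ← ih (hist ++ [B]), hlast, mul_sum]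
    refine sum_congr rfl fun f _ => ?_
    simp [seqProbAux, stdStep, transition_apply]

theorem probForced_eq (S T : Finset V) (ℓ : ℕ) :
    probForced G S T ℓ = ∑ B with T ⊆ B, (transition G ^ ℓ) S B := by
  rw [probForced, trajEventProb]
  convert sum_seqProbAux_eq G (T ⊆ ·) ℓ [S] <;> rfl

theorem probAllBlue_eq (S : Finset V) (ℓ : ℕ) :
    probAllBlue G S ℓ = (transition G ^ ℓ) S univ := by
  rw [probAllBlue, probForced_eq]
  simp [univ_subset_iff, sum_filter]

theorem probAllBlue_nonneg (S : Finset V) (ℓ : ℕ) : 0 ≤ probAllBlue G S ℓ :=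
  (transition_pow_nonneg G ℓ S univ).trans_eq (probAllBlue_eq G S ℓ).symm

theorem probAllBlue_le_one (S : Finset V) (ℓ : ℕ) : probAllBlue G S ℓ ≤ 1 := by
  rw [probAllBlue_eq, ← sum_transition_pow G ℓ S]
  exact single_le_sum (fun B _ => transition_pow_nonneg G ℓ S B) (mem_univ univ)

end Law

section DoublyExponential

variable {V : Type*} [Fintype V] [DecidableEq V] (G : SimpleGraph V)

theorem sum_transition_mul_card_le (B : Finset V) :
    ∑ B', transition G B B' * (#B' : ℝ) ≤ #B + (#B : ℝ) ^ 2 := by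
  calc ∑ B', transition G B B' * (#B' : ℝ)
      ≤ ∑ B', transition G B B' * (#B + ∑ _v ∈ B' \ B, (1 : ℝ)) := by
        refine sum_transition_mul_le G fun B' hB' => ?_
        rw [sum_const, nsmul_one, ← Nat.cast_add, add_comm, card_sdiff_add_card_eq_card hB']
    _ = #B + ∑ v ∈ Bᶜ, turnProb (edgeForceProb G B) B v := by
        simp only [transition_apply, mul_add, sum_add_distrib, sum_stepOfQ_mul_sum_sdiff,
          ← sum_mul, sum_stepOfQ, one_mul, mul_one]
    _ ≤ #B + (#B : ℝ) ^ 2 := by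
        gcongr
        exact (sum_le_sum fun v _ => turnProb_le_forceMean G B v).trans
          ((sum_compl_forceMean_le_potential G B).trans (potential_le_card_sq G B))

theorem sum_transition_mul_log_le (B : Finset V) :
    ∑ B', transition G B B' * log (1 + #B') ≤ 2 * log (1 + #B) := by
  have hsum : ∑ B', transition G B B' = 1 := sum_stepOfQ (edgeForceProb G B) B
  calc ∑ B', transition G B B' * log (1 + #B')
      ≤ log (∑ B', transition G B B' * (1 + #B')) :=
        strictConcaveOn_log_Ioi.concaveOn.le_map_sum (fun B' _ => transition_nonneg G B B') hsum
          fun B' _ => Set.mem_Ioi.2 (by positivity)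
    _ ≤ log ((1 + #B) ^ 2) := by
        have hmean : ∑ B', transition G B B' * (1 + #B') =
            1 + ∑ B', transition G B B' * (#B' : ℝ) := by
          simp only [mul_add, mul_one, sum_add_distrib, hsum]
        have hpos : 0 ≤ ∑ B', transition G B B' * (#B' : ℝ) :=
          sum_nonneg fun B' _ => mul_nonneg (transition_nonneg G B B') (Nat.cast_nonneg _)
        rw [hmean]
        refine log_le_log (by linarith) ?_
        nlinarith [sum_transition_mul_card_le G B, Nat.cast_nonneg (α := ℝ) #B]
    _ = 2 * log (1 + #B) := by
        rw [log_pow]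
        norm_num

theorem sum_transition_pow_mul_log_le (t : ℕ) (S : Finset V) :
    ∑ B, (transition G ^ t) S B * log (1 + #B) ≤ 2 ^ t * log (1 + #S) := by
  induction t with
  | zero => simp [Matrix.one_apply]
  | succ t ih =>
    calc ∑ B, (transition G ^ (t + 1)) S B * log (1 + #B)
        ≤ ∑ B, (transition G ^ t) S B * (2 * log (1 + #B)) := by
          rw [sum_transition_pow_succ_mul]
          exact sum_le_sum fun B _ => mul_le_mul_of_nonneg_left (sum_transition_mul_log_le G B)
            (transition_pow_nonneg G t S B)
      _ = 2 * ∑ B, (transition G ^ t) S B * log (1 + #B) := by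
          rw [mul_sum]
          exact sum_congr rfl fun B _ => by ring
      _ ≤ 2 ^ (t + 1) * log (1 + #S) := by
          rw [pow_succ']
          linarith

theorem probAllBlue_mul_log_le (S : Finset V) (ℓ : ℕ) :
    probAllBlue G S ℓ * log (1 + Fintype.card V) ≤ 2 ^ ℓ * log (1 + #S) := by
  rw [probAllBlue_eq]
  refine le_trans ?_ (sum_transition_pow_mul_log_le G ℓ S)
  exact single_le_sum (f := fun B => (transition G ^ ℓ) S B * log (1 + #B))
    (fun B _ => mul_nonneg (transition_pow_nonneg G ℓ S B)
      (log_nonneg (le_add_of_nonneg_right (Nat.cast_nonneg _)))) (mem_univ univ)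

end DoublyExponential

section AgreeOn

variable {V : Type*} {B B' : Finset V} {G G' : SimpleGraph V}

/-- The graphs `G` and `G'` have the same edges inside `B` and the same degrees on `B`. This is all
that zero forcing reveals about the graph while the blue set stays inside `B`. -/
def AgreeOn (B : Finset V) (G G' : SimpleGraph V) : Prop :=
  (∀ u ∈ B, ∀ v ∈ B, G.Adj u v ↔ G'.Adj u v) ∧ ∀ u ∈ B, deg G u = deg G' u

theorem AgreeOn.mono (h : AgreeOn B' G G') (hB : B ⊆ B') : AgreeOn B G G' :=
  ⟨fun u hu v hv => h.1 u (hB hu) v (hB hv), fun u hu => h.2 u (hB hu)⟩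

theorem AgreeOn.adjMatrix_eq (h : AgreeOn B G G') {u v : V} (hu : u ∈ B) (hv : v ∈ B) :
    G.adjMatrix ℝ u v = G'.adjMatrix ℝ u v := by
  simp [SimpleGraph.adjMatrix_apply, h.1 u hu v hv]

theorem AgreeOn.closedDegIn_eq (h : AgreeOn B G G') {u : V} (hu : u ∈ B) :
    (closedDegIn G B u : ℝ) = closedDegIn G' B u := by
  rw [PZF.closedDegIn_eq G hu, PZF.closedDegIn_eq G' hu]
  exact congrArg _ (sum_congr rfl fun x hx => h.adjMatrix_eq hu hx)

theorem AgreeOn.potential_eq (h : AgreeOn B G G') : potential G B = potential G' B :=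
  sum_congr rfl fun _ hu => h.closedDegIn_eq hu

variable [DecidableEq V]

theorem AgreeOn.edgeForceProb_eq (h : AgreeOn B' G G') (hB : B ⊆ B') {u v : V} (hu : u ∈ B)
    (hv : v ∈ B') : edgeForceProb G B u v = edgeForceProb G' B u v := by
  by_cases hvB : v ∈ B
  · simp [edgeForceProb, hvB]
  · rw [PZF.edgeForceProb_eq G hu hvB, PZF.edgeForceProb_eq G' hu hvB, h.adjMatrix_eq (hB hu) hv,
      (h.mono hB).closedDegIn_eq hu, h.2 u (hB hu)]

variable [Fintype V]

theorem card_white_neighbors (G : SimpleGraph V) (B : Finset V) (u : V) :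
    (#{v ∈ Bᶜ | G.Adj u v} : ℝ) = deg G u - ∑ x ∈ B, G.adjMatrix ℝ u x := by
  rw [deg_eq_sum, ← sum_add_sum_compl B]
  simp [SimpleGraph.adjMatrix_apply]

theorem prod_compl_prod_one_sub_edgeForceProb (G : SimpleGraph V) (hB : B ⊆ B') :
    ∏ v ∈ B'ᶜ, ∏ u ∈ B, (1 - edgeForceProb G B u v) =
      ∏ u ∈ B, (1 - (closedDegIn G B u / deg G u : ℝ)) ^ #{v ∈ B'ᶜ | G.Adj u v} := by
  rw [Finset.prod_comm]
  refine prod_congr rfl fun u hu => ?_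
  rw [← prod_const, prod_filter]
  refine prod_congr rfl fun v hv => ?_
  have hvB : v ∉ B := fun h => mem_compl.1 hv (hB h)
  rw [PZF.edgeForceProb_eq G hu hvB, SimpleGraph.adjMatrix_apply]
  split_ifs <;> simp

theorem AgreeOn.transition_eq (h : AgreeOn B' G G') :
    transition G B B' = transition G' B B' := by
  simp only [transition_apply]
  by_cases hB : B ⊆ B'
  · have hcard : ∀ u ∈ B, #{v ∈ B'ᶜ | G.Adj u v} = #{v ∈ B'ᶜ | G'.Adj u v} := by
      intro u hu
      rw [← Nat.cast_inj (R := ℝ), card_white_neighbors, card_white_neighbors, h.2 u (hB hu)]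
      exact congrArg _ (sum_congr rfl fun x hx => h.adjMatrix_eq (hB hu) hx)
    rw [stepOfQ, stepOfQ, if_pos hB, if_pos hB, prod_compl_prod_one_sub_edgeForceProb G hB,
      prod_compl_prod_one_sub_edgeForceProb G' hB]
    congr 1
    · refine prod_congr rfl fun v hv => congrArg _ (prod_congr rfl fun u hu => ?_)
      rw [h.edgeForceProb_eq hB hu (mem_sdiff.1 hv).1]
    · refine prod_congr rfl fun u hu => ?_
      rw [(h.mono hB).closedDegIn_eq hu, h.2 u (hB hu), hcard u hu]
  · rw [stepOfQ_of_not_subset _ hB, stepOfQ_of_not_subset _ hB]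

theorem AgreeOn.transition_pow_eq (h : AgreeOn B G G') (S : Finset V) (t : ℕ) :
    (transition G ^ t) S B = (transition G' ^ t) S B := by
  induction t generalizing B with
  | zero => simp
  | succ t ih =>
    rw [pow_succ, pow_succ, Matrix.mul_apply, Matrix.mul_apply]
    refine sum_congr rfl fun C _ => ?_
    by_cases hC : C ⊆ B
    · rw [ih (h.mono hC), h.transition_eq]
    · simp only [transition_apply, stepOfQ_of_not_subset _ hC, mul_zero]

end AgreeOn

section EdgeSwitch

variable {V : Type*} (G : SimpleGraph V) {w v x : V}

/-- The graph obtained from `G` by exchanging the statuses of the vertex pairs `wv` and `wx`. -/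
def edgeSwitch (w v x : V) : SimpleGraph V :=
  .fromEdgeSet (Equiv.swap s(w, v) s(w, x) ⁻¹' G.edgeSet)

theorem edgeSwitch_adj (hv : w ≠ v) (hx : w ≠ x) (a b : V) :
    (edgeSwitch G w v x).Adj a b ↔ Equiv.swap s(w, v) s(w, x) s(a, b) ∈ G.edgeSet := by
  rw [edgeSwitch, SimpleGraph.fromEdgeSet_adj, and_iff_left_of_imp, Set.mem_preimage]
  rintro h rfl
  rw [Set.mem_preimage, Equiv.swap_apply_of_ne_of_ne (by grind) (by grind)] at h
  simp at h

theorem edgeSet_edgeSwitch (hv : w ≠ v) (hx : w ≠ x) :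
    (edgeSwitch G w v x).edgeSet = Equiv.swap s(w, v) s(w, x) ⁻¹' G.edgeSet := by
  ext ⟨a, b⟩
  exact edgeSwitch_adj G hv hx a b

theorem edgeSwitch_edgeSwitch (hv : w ≠ v) (hx : w ≠ x) :
    edgeSwitch (edgeSwitch G w v x) w v x = G := by
  ext a b
  rw [edgeSwitch_adj _ hv hx, edgeSet_edgeSwitch G hv hx]
  simp

theorem ncard_edgeSet_edgeSwitch (hv : w ≠ v) (hx : w ≠ x) :
    (edgeSwitch G w v x).edgeSet.ncard = G.edgeSet.ncard := by
  rw [edgeSet_edgeSwitch G hv hx, ← Equiv.image_symm_eq_preimage]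
  exact Set.ncard_image_of_injective _ (Equiv.injective _)

theorem edgeSwitch_adj_left (hv : w ≠ v) (hx : w ≠ x) (b : V) :
    (edgeSwitch G w v x).Adj w b ↔ G.Adj w (Equiv.swap v x b) := by
  have hswap : Equiv.swap s(w, v) s(w, x) s(w, b) = s(w, Equiv.swap v x b) := by
    simp only [Equiv.swap_apply_def, Sym2.congr_right]
    split_ifs <;> rfl
  rw [edgeSwitch_adj G hv hx, hswap, SimpleGraph.mem_edgeSet]

theorem edgeSwitch_adj_of_ne (hv : w ≠ v) (hx : w ≠ x) {a b : V} (hav : s(a, b) ≠ s(w, v))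
    (hax : s(a, b) ≠ s(w, x)) : (edgeSwitch G w v x).Adj a b ↔ G.Adj a b := by
  rw [edgeSwitch_adj G hv hx, Equiv.swap_apply_of_ne_of_ne hav hax, SimpleGraph.mem_edgeSet]

theorem adjMatrix_edgeSwitch_left (hv : w ≠ v) (hx : w ≠ x) (b : V) :
    (edgeSwitch G w v x).adjMatrix ℝ w b = G.adjMatrix ℝ w (Equiv.swap v x b) := by
  simp [SimpleGraph.adjMatrix_apply, edgeSwitch_adj_left G hv hx]

theorem deg_edgeSwitch [Finite V] (hv : w ≠ v) (hx : w ≠ x) {a : V} (hav : a ≠ v) (hax : a ≠ x) :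
    deg (edgeSwitch G w v x) a = deg G a := by
  have := Fintype.ofFinite V
  rw [← Nat.cast_inj (R := ℝ), deg_eq_sum, deg_eq_sum]
  rcases eq_or_ne a w with rfl | haw
  · simp only [adjMatrix_edgeSwitch_left G hv hx]
    exact Equiv.sum_comp (Equiv.swap v x) fun b => G.adjMatrix ℝ a b
  · refine sum_congr rfl fun b _ => ?_
    simp only [SimpleGraph.adjMatrix_apply]
    rw [edgeSwitch_adj_of_ne G hv hx (by grind) (by grind)]

theorem agreeOn_edgeSwitch [Finite V] (hv : w ≠ v) (hx : w ≠ x) {B : Finset V} (hvB : v ∉ B)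
    (hxB : x ∉ B) : AgreeOn B (edgeSwitch G w v x) G :=
  ⟨fun a ha b hb => edgeSwitch_adj_of_ne G hv hx (by grind) (by grind), fun a ha =>
    deg_edgeSwitch G hv hx (ne_of_mem_of_not_mem ha hvB) (ne_of_mem_of_not_mem ha hxB)⟩

section Forcing

variable [Finite V] [DecidableEq V] {B : Finset V}

theorem edgeForceProb_edgeSwitch (hv : w ≠ v) (hx : w ≠ x) {u y : V} (hvB : v ∉ B)
    (hxB : x ∉ B) (hu : u ∈ B) (huw : u ≠ w) :
    edgeForceProb (edgeSwitch G w v x) B u y = edgeForceProb G B u y := by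
  have hagree := agreeOn_edgeSwitch G hv hx hvB hxB
  have hadj : (edgeSwitch G w v x).Adj u y ↔ G.Adj u y :=
    edgeSwitch_adj_of_ne G hv hx (by grind) (by grind)
  rw [edgeForceProb, edgeForceProb, hadj, hagree.closedDegIn_eq hu, hagree.2 u hu]

theorem forceMean_edgeSwitch (hv : w ≠ v) (hx : w ≠ x) {y : V} (hwB : w ∉ B) (hvB : v ∉ B)
    (hxB : x ∉ B) :
    forceMean (edgeSwitch G w v x) B y = forceMean G B y :=
  sum_congr rfl fun _ hu =>
    edgeForceProb_edgeSwitch G hv hx hvB hxB hu (ne_of_mem_of_not_mem hu hwB)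

end Forcing

variable [Fintype V] [DecidableEq V] {F : SimpleGraph V → ℝ}

theorem sum_mul_adjMatrix_mul_one_sub_swap (hv : w ≠ v) (hx : w ≠ x)
    (hF : ∀ G, F (edgeSwitch G w v x) = F G) :
    ∑ G, F G * (G.adjMatrix ℝ w v * (1 - G.adjMatrix ℝ w x)) =
      ∑ G, F G * (G.adjMatrix ℝ w x * (1 - G.adjMatrix ℝ w v)) := by
  refine sum_bij' (fun G _ => edgeSwitch G w v x) (fun G _ => edgeSwitch G w v x)
    (fun _ _ => mem_univ _) (fun _ _ => mem_univ _) (fun G _ => edgeSwitch_edgeSwitch G hv hx)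
    (fun G _ => edgeSwitch_edgeSwitch G hv hx) fun G _ => ?_
  rw [hF, adjMatrix_edgeSwitch_left G hv hx, adjMatrix_edgeSwitch_left G hv hx]
  simp

theorem sum_mul_adjMatrix_le (hF0 : ∀ G, 0 ≤ F G) (hv : w ≠ v) (B : Finset V) {D c : ℝ}
    (hc : 0 < c) (hcard : #B + 2 + D + c ≤ Fintype.card V)
    (hF : ∀ G, ∀ x ∉ B, x ≠ v → x ≠ w → F (edgeSwitch G w v x) = F G)
    (hD : ∀ G, F G ≠ 0 → deg G w ≤ D) :
    ∑ G, F G * G.adjMatrix ℝ w v ≤ D / c * ∑ G, F G := by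
  set X : Finset V := (insert v (insert w B))ᶜ with hX
  have hdeg : ∀ G : SimpleGraph V, ∑ x ∈ X, G.adjMatrix ℝ w x ≤ deg G w := by
    intro G
    rw [deg_eq_sum]
    exact sum_le_univ_sum_of_nonneg fun x => adjMatrix_nonneg G w x
  have hXcard : D + c ≤ #X := by
    have hle : (#(insert v (insert w B)) : ℝ) ≤ #B + 2 := by
      exact_mod_cast (card_insert_le _ _).trans (Nat.succ_le_succ (card_insert_le _ _))
    have hadd : (#X : ℝ) + #(insert v (insert w B)) = Fintype.card V := by
      exact_mod_cast card_compl_add_card _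
    linarith
  rw [div_mul_eq_mul_div, le_div_iff₀' hc, mul_sum, mul_sum]
  calc ∑ G, c * (F G * G.adjMatrix ℝ w v)
      ≤ ∑ G, ∑ x ∈ X, F G * (G.adjMatrix ℝ w v * (1 - G.adjMatrix ℝ w x)) := by
        refine sum_le_sum fun G _ => ?_
        rw [mul_comm c, ← mul_sum, ← mul_sum, sum_sub_distrib, ← mul_assoc (F G)]
        rcases eq_or_ne (F G) 0 with h | h
        · simp [h]
        · refine mul_le_mul_of_nonneg_left ?_ (mul_nonneg (hF0 G) (adjMatrix_nonneg G w v))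
          simp only [sum_const, nsmul_one]
          linarith [hdeg G, hD G h]
    _ = ∑ G, ∑ x ∈ X, F G * (G.adjMatrix ℝ w x * (1 - G.adjMatrix ℝ w v)) := by
        rw [sum_comm, sum_comm (s := univ)]
        refine sum_congr rfl fun x hx => ?_
        simp only [hX, mem_compl, mem_insert, not_or] at hx
        exact sum_mul_adjMatrix_mul_one_sub_swap hv (Ne.symm hx.2.1) fun G =>
          hF G x hx.2.2 hx.1 hx.2.1
    _ ≤ ∑ G, D * F G := by
        refine sum_le_sum fun G _ => ?_
        rcases eq_or_ne (F G) 0 with h | h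
        · simp [h]
        · rw [← mul_sum, ← sum_mul, mul_comm D]
          refine mul_le_mul_of_nonneg_left ?_ (hF0 G)
          exact (mul_le_of_le_one_right (sum_nonneg fun x _ => adjMatrix_nonneg G w x)
            (sub_le_self _ (adjMatrix_nonneg G w v))).trans ((hdeg G).trans (hD G h))

end EdgeSwitch

section Truncation

variable {V : Type*} (G : SimpleGraph V) (D s : ℝ) (B : Finset V) {B' : Finset V}

/-- The potential of `B` truncated at `s`, counted only while all degrees on `B` are at most `D`. -/
noncomputable def truncPotential : ℝ :=
  if ∀ u ∈ B, (deg G u : ℝ) ≤ D then min (potential G B) s else 0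

/-- The blue set `B` has degrees at most `D` and potential below the truncation level `s`. -/
def Unsaturated : Prop :=
  (∀ u ∈ B, (deg G u : ℝ) ≤ D) ∧ potential G B < s

variable {G D s B}

theorem truncPotential_nonneg (hs : 0 ≤ s) : 0 ≤ truncPotential G D s B := by
  rw [truncPotential]
  split_ifs
  exacts [le_min (potential_nonneg G B) hs, le_rfl]

theorem truncPotential_le_potential : truncPotential G D s B ≤ potential G B := by
  rw [truncPotential]
  split_ifs
  exacts [min_le_left _ _, potential_nonneg G B]

theorem Unsaturated.truncPotential_eq (h : Unsaturated G D s B) :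
    truncPotential G D s B = potential G B := by
  rw [truncPotential, if_pos h.1, min_eq_left h.2.le]

theorem Unsaturated.card_lt (h : Unsaturated G D s B) : (#B : ℝ) < s :=
  (card_le_potential G B).trans_lt h.2

theorem AgreeOn.unsaturated_iff {G' : SimpleGraph V} (h : AgreeOn B G G') :
    Unsaturated G D s B ↔ Unsaturated G' D s B := by
  rw [Unsaturated, Unsaturated, h.potential_eq]
  exact and_congr_left' (forall₂_congr fun u hu => by rw [h.2 u hu])

theorem truncPotential_le_of_not_unsaturated (hs : 0 ≤ s) (h : ¬Unsaturated G D s B)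
    (hB : B ⊆ B') : truncPotential G D s B' ≤ truncPotential G D s B := by
  by_cases hdeg : ∀ u ∈ B', (deg G u : ℝ) ≤ D
  · have hdegB : ∀ u ∈ B, (deg G u : ℝ) ≤ D := fun u hu => hdeg u (hB hu)
    have hpot : s ≤ potential G B := not_lt.1 fun hlt => h ⟨hdegB, hlt⟩
    rw [truncPotential, truncPotential, if_pos hdeg, if_pos hdegB, min_eq_right hpot]
    exact min_le_right _ _
  · rw [truncPotential, if_neg hdeg]
    exact truncPotential_nonneg hs

variable (G D s) [DecidableEq V]

theorem potential_eq_of_subset (hB : B ⊆ B') :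
    potential G B' = potential G B + ∑ v ∈ B' \ B, (1 + 2 * ∑ w ∈ B, G.adjMatrix ℝ w v) +
      ∑ v ∈ B' \ B, ∑ v' ∈ B' \ B, G.adjMatrix ℝ v' v := by
  have hcard : (#B' : ℝ) = #(B' \ B) + #B := by
    exact_mod_cast (card_sdiff_add_card_eq_card hB).symm
  have hcross : ∑ v ∈ B' \ B, ∑ w ∈ B, G.adjMatrix ℝ w v =
      ∑ w ∈ B, ∑ v ∈ B' \ B, G.adjMatrix ℝ w v := sum_comm
  have hcross' : ∑ v ∈ B' \ B, ∑ w ∈ B, G.adjMatrix ℝ v w =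
      ∑ w ∈ B, ∑ v ∈ B' \ B, G.adjMatrix ℝ w v := by
    rw [← hcross]
    exact sum_congr rfl fun v _ => sum_congr rfl fun w _ => adjMatrix_comm G v w
  have hnew : ∑ v ∈ B' \ B, ∑ v' ∈ B' \ B, G.adjMatrix ℝ v' v =
      ∑ v ∈ B' \ B, ∑ v' ∈ B' \ B, G.adjMatrix ℝ v v' := sum_comm
  simp only [potential_eq, ← sum_sdiff hB, sum_add_distrib, ← mul_sum, hcross, hcross', hnew, hcard,
    sum_const, nsmul_one]
  ring

theorem truncPotential_le_of_subset (hB : B ⊆ B') :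
    truncPotential G D s B' ≤
      potential G B + ∑ v ∈ B' \ B, (1 + 2 * ∑ w ∈ B, G.adjMatrix ℝ w v) +
        ∑ v ∈ B' \ B, ∑ v' ∈ B' \ B, if (deg G v' : ℝ) ≤ D then G.adjMatrix ℝ v' v else 0 := by
  by_cases hdeg : ∀ u ∈ B', (deg G u : ℝ) ≤ D
  · rw [truncPotential, if_pos hdeg]
    refine (min_le_left _ _).trans_eq ((potential_eq_of_subset G hB).trans ?_)
    refine congrArg _ (sum_congr rfl fun v _ => sum_congr rfl fun v' hv' => ?_)
    rw [if_pos (hdeg v' (mem_sdiff.1 hv').1)]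
  · rw [truncPotential, if_neg hdeg]
    refine add_nonneg (add_nonneg (potential_nonneg G B) (sum_nonneg fun v _ => ?_))
      (sum_nonneg fun v _ => sum_nonneg fun v' _ => ?_)
    · have := sum_nonneg fun w (_ : w ∈ B) => adjMatrix_nonneg G w v
      positivity
    · split_ifs
      exacts [adjMatrix_nonneg G v' v, le_rfl]

variable (B)

theorem forceMean_mul_sum_adjMatrix (v : V) :
    forceMean G B v * ∑ w ∈ B, G.adjMatrix ℝ w v =
      forceMean G B v +
        ∑ w ∈ B, (∑ u ∈ B.erase w, edgeForceProb G B u v) * G.adjMatrix ℝ w v := by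
  rw [mul_sum]
  nth_rw 2 [forceMean]
  rw [← sum_add_distrib]
  refine sum_congr rfl fun w hw => ?_
  rw [forceMean, ← add_sum_erase B _ hw, add_mul, edgeForceProb_mul_adjMatrix]

variable [Fintype V]

/-- The expected number of forces of a white `v` by a blue `u`, counted once for each blue neighbour
`w ≠ u` of `v`. -/
noncomputable def backExcess : ℝ :=
  ∑ v ∈ Bᶜ, ∑ w ∈ B, (∑ u ∈ B.erase w, edgeForceProb G B u v) * G.adjMatrix ℝ w v

/-- The contribution to the next potential of the edges between newly blue vertices, bounded as if
their being forced were independent of each other and only counting endpoints of degree at most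
`D`. -/
noncomputable def newExcess : ℝ :=
  ∑ v ∈ Bᶜ, ∑ v' ∈ Bᶜ, forceMean G B v * forceMean G B v' *
    if (deg G v' : ℝ) ≤ D then G.adjMatrix ℝ v' v else 0

theorem sum_turnProb_mul_le :
    ∑ v ∈ Bᶜ, turnProb (edgeForceProb G B) B v * (1 + 2 * ∑ w ∈ B, G.adjMatrix ℝ w v) ≤
      3 * potential G B + 2 * backExcess G B :=
  calc ∑ v ∈ Bᶜ, turnProb (edgeForceProb G B) B v * (1 + 2 * ∑ w ∈ B, G.adjMatrix ℝ w v)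
      ≤ ∑ v ∈ Bᶜ, forceMean G B v * (1 + 2 * ∑ w ∈ B, G.adjMatrix ℝ w v) := by
        refine sum_le_sum fun v _ => mul_le_mul_of_nonneg_right (turnProb_le_forceMean G B v) ?_
        have := sum_nonneg fun w (_ : w ∈ B) => adjMatrix_nonneg G w v
        positivity
    _ = 3 * ∑ v ∈ Bᶜ, forceMean G B v + 2 * backExcess G B := by
        rw [backExcess, mul_sum, mul_sum, ← sum_add_distrib]
        refine sum_congr rfl fun v _ => ?_
        linear_combination 2 * forceMean_mul_sum_adjMatrix G B v
    _ ≤ 3 * potential G B + 2 * backExcess G B := by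
        linarith [sum_compl_forceMean_le_potential G B]

theorem sum_turnProb_mul_turnProb_mul_le :
    ∑ v ∈ Bᶜ, ∑ v' ∈ Bᶜ, turnProb (edgeForceProb G B) B v * turnProb (edgeForceProb G B) B v' *
      (if (deg G v' : ℝ) ≤ D then G.adjMatrix ℝ v' v else 0) ≤ newExcess G D B := by
  have hturn := turnProb_nonneg (edgeForceProb_nonneg G B) (edgeForceProb_le_one G B) B
  refine sum_le_sum fun v _ => sum_le_sum fun v' _ => mul_le_mul_of_nonneg_right ?_ ?_
  · exact mul_le_mul (turnProb_le_forceMean G B v) (turnProb_le_forceMean G B v') (hturn v')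
      (forceMean_nonneg G B v)
  · split_ifs
    exacts [adjMatrix_nonneg G v' v, le_rfl]

theorem sum_transition_mul_truncPotential_le :
    ∑ B', transition G B B' * truncPotential G D s B' ≤
      4 * potential G B + 2 * backExcess G B + newExcess G D B := by
  refine (sum_transition_mul_le G fun B' => truncPotential_le_of_subset G D s).trans ?_
  simp only [transition_apply, mul_add, sum_add_distrib, ← sum_mul, sum_stepOfQ, one_mul]
  have hedge := sum_turnProb_mul_le G B
  have hnew := sum_turnProb_mul_turnProb_mul_le G D B
  rw [← sum_stepOfQ_mul_sum_sdiff] at hedge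
  rw [← sum_stepOfQ_mul_sum_sum_sdiff _ _ (by simp)] at hnew
  simp only [sum_add_distrib, mul_add] at hedge
  linarith

variable {s}

theorem sum_transition_mul_truncPotential_le_ite (hs : 0 ≤ s) :
    ∑ B', transition G B B' * truncPotential G D s B' ≤ 4 * truncPotential G D s B +
      if Unsaturated G D s B then 2 * backExcess G B + newExcess G D B else 0 := by
  split_ifs with h
  · rw [h.truncPotential_eq]
    linarith [sum_transition_mul_truncPotential_le G D s B]
  · calc ∑ B', transition G B B' * truncPotential G D s B'
        ≤ ∑ B', transition G B B' * truncPotential G D s B :=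
          sum_transition_mul_le G fun B' => truncPotential_le_of_not_unsaturated hs h
      _ = truncPotential G D s B := by
          simp only [transition_apply, ← sum_mul, sum_stepOfQ, one_mul]
      _ ≤ 4 * truncPotential G D s B + 0 := by
          linarith [truncPotential_nonneg (G := G) (D := D) (B := B) hs]

end Truncation

section Annealed

variable {V : Type*} [Fintype V] [DecidableEq V] {B : Finset V}

variable {F : SimpleGraph V → ℝ} {D c : ℝ}

theorem sum_mul_edgeForceProb_mul_adjMatrix_le (hF0 : ∀ G, 0 ≤ F G)
    (hF : ∀ G G', G.edgeSet.ncard = G'.edgeSet.ncard → AgreeOn B G G' → F G = F G')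
    (hFD : ∀ G, F G ≠ 0 → ∀ u ∈ B, (deg G u : ℝ) ≤ D) (hc : 0 < c)
    (hcard : #B + 2 + D + c ≤ Fintype.card V) {u v w : V} (hu : u ∈ B) (hw : w ∈ B) (huw : u ≠ w)
    (hv : v ∉ B) :
    ∑ G, F G * edgeForceProb G B u v * G.adjMatrix ℝ w v ≤
      D / c * ∑ G, F G * edgeForceProb G B u v := by
  have hwv : w ≠ v := ne_of_mem_of_not_mem hw hv
  refine sum_mul_adjMatrix_le (fun G => mul_nonneg (hF0 G) (edgeForceProb_nonneg G B u v)) hwv B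
    hc hcard (fun G x hxB _ hxw => ?_) fun G h => hFD G (left_ne_zero_of_mul h) w hw
  rw [hF _ G (ncard_edgeSet_edgeSwitch G hwv hxw.symm) (agreeOn_edgeSwitch G hwv hxw.symm hv hxB),
    edgeForceProb_edgeSwitch G hwv hxw.symm hv hxB hu huw]

theorem sum_mul_backExcess_le (hF0 : ∀ G, 0 ≤ F G)
    (hF : ∀ G G', G.edgeSet.ncard = G'.edgeSet.ncard → AgreeOn B G G' → F G = F G')
    (hFD : ∀ G, F G ≠ 0 → ∀ u ∈ B, (deg G u : ℝ) ≤ D) (hD : 0 ≤ D) (hc : 0 < c)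
    (hcard : #B + 2 + D + c ≤ Fintype.card V) :
    ∑ G, F G * backExcess G B ≤ D / c * ∑ G, F G * (#B * potential G B) := by
  calc ∑ G, F G * backExcess G B
      = ∑ v ∈ Bᶜ, ∑ w ∈ B, ∑ u ∈ B.erase w,
          ∑ G, F G * edgeForceProb G B u v * G.adjMatrix ℝ w v := by
        simp only [backExcess, mul_sum, sum_mul, ← mul_assoc, sum_comm (s := univ)]
    _ ≤ ∑ v ∈ Bᶜ, ∑ _w ∈ B, ∑ u ∈ B, D / c * ∑ G, F G * edgeForceProb G B u v := by
        refine sum_le_sum fun v hv => sum_le_sum fun w hw => (sum_le_sum fun u hu => ?_).trans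
          (sum_le_sum_of_subset_of_nonneg (erase_subset w B) fun u _ _ => ?_)
        · exact sum_mul_edgeForceProb_mul_adjMatrix_le hF0 hF hFD hc hcard (mem_of_mem_erase hu) hw
            (ne_of_mem_erase hu) (mem_compl.1 hv)
        · exact mul_nonneg (div_nonneg hD hc.le) <|
            sum_nonneg fun G _ => mul_nonneg (hF0 G) (edgeForceProb_nonneg G B u v)
    _ = D / c * ∑ G, F G * (#B * ∑ v ∈ Bᶜ, forceMean G B v) := by
        simp only [forceMean, sum_const, nsmul_eq_mul, mul_sum, sum_comm (t := univ)]
        refine sum_congr rfl fun G _ => sum_congr rfl fun v _ => sum_congr rfl fun u _ => ?_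
        ring
    _ ≤ D / c * ∑ G, F G * (#B * potential G B) := by
        refine mul_le_mul_of_nonneg_left (sum_le_sum fun G _ => ?_) (div_nonneg hD hc.le)
        gcongr
        exacts [hF0 G, sum_compl_forceMean_le_potential G B]

theorem sum_mul_forceMean_mul_adjMatrix_le (hF0 : ∀ G, 0 ≤ F G)
    (hF : ∀ G G', G.edgeSet.ncard = G'.edgeSet.ncard → AgreeOn B G G' → F G = F G')
    (hD : 0 ≤ D) (hc : 0 < c) (hcard : #B + 2 + D + c ≤ Fintype.card V) {v v' : V} (hv : v ∉ B)
    (hv' : v' ∉ B) :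
    ∑ G, F G * (forceMean G B v * forceMean G B v') *
        (if (deg G v' : ℝ) ≤ D then G.adjMatrix ℝ v' v else 0) ≤
      D / c * ∑ G, F G * (forceMean G B v * forceMean G B v') := by
  have hF'0 : ∀ G, 0 ≤ F G * (forceMean G B v * forceMean G B v') := fun G =>
    mul_nonneg (hF0 G) (mul_nonneg (forceMean_nonneg G B v) (forceMean_nonneg G B v'))
  rcases eq_or_ne v' v with rfl | hne
  · simpa using mul_nonneg (div_nonneg hD hc.le) (sum_nonneg fun G _ => hF'0 G)
  calc ∑ G, F G * (forceMean G B v * forceMean G B v') *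
        (if (deg G v' : ℝ) ≤ D then G.adjMatrix ℝ v' v else 0)
      = ∑ G, (if (deg G v' : ℝ) ≤ D then F G * (forceMean G B v * forceMean G B v') else 0) *
          G.adjMatrix ℝ v' v := by
        simp only [mul_ite, ite_mul, mul_zero, zero_mul]
    _ ≤ D / c * ∑ G,
          if (deg G v' : ℝ) ≤ D then F G * (forceMean G B v * forceMean G B v') else 0 := by
        refine sum_mul_adjMatrix_le (fun G => ite_nonneg (hF'0 G) le_rfl) hne B hc hcard
          (fun G x hxB _ hxv' => ?_) fun G h => of_not_not fun hdeg => h (if_neg hdeg)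
        have hx := hxv'.symm
        rw [hF _ G (ncard_edgeSet_edgeSwitch G hne hx) (agreeOn_edgeSwitch G hne hx hv hxB),
          forceMean_edgeSwitch G hne hx hv' hv hxB, forceMean_edgeSwitch G hne hx hv' hv hxB,
          deg_edgeSwitch G hne hx hne hx]
    _ ≤ D / c * ∑ G, F G * (forceMean G B v * forceMean G B v') := by
        refine mul_le_mul_of_nonneg_left (sum_le_sum fun G _ => ?_) (div_nonneg hD hc.le)
        split_ifs
        exacts [le_rfl, hF'0 G]

theorem sum_mul_newExcess_le (hF0 : ∀ G, 0 ≤ F G)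
    (hF : ∀ G G', G.edgeSet.ncard = G'.edgeSet.ncard → AgreeOn B G G' → F G = F G')
    (hD : 0 ≤ D) (hc : 0 < c) (hcard : #B + 2 + D + c ≤ Fintype.card V) :
    ∑ G, F G * newExcess G D B ≤ D / c * ∑ G, F G * potential G B ^ 2 := by
  calc ∑ G, F G * newExcess G D B
      = ∑ v ∈ Bᶜ, ∑ v' ∈ Bᶜ, ∑ G, F G * (forceMean G B v * forceMean G B v') *
          (if (deg G v' : ℝ) ≤ D then G.adjMatrix ℝ v' v else 0) := by
        simp only [newExcess, mul_sum, ← mul_assoc, sum_comm (s := univ)]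
    _ ≤ ∑ v ∈ Bᶜ, ∑ v' ∈ Bᶜ, D / c * ∑ G, F G * (forceMean G B v * forceMean G B v') :=
        sum_le_sum fun v hv => sum_le_sum fun v' hv' =>
          sum_mul_forceMean_mul_adjMatrix_le hF0 hF hD hc hcard (mem_compl.1 hv) (mem_compl.1 hv')
    _ = D / c * ∑ G, F G * (∑ v ∈ Bᶜ, forceMean G B v) ^ 2 := by
        simp only [sq, sum_mul_sum]
        simp only [mul_sum, sum_comm (t := univ)]
    _ ≤ D / c * ∑ G, F G * potential G B ^ 2 := by
        refine mul_le_mul_of_nonneg_left (sum_le_sum fun G _ => ?_) (div_nonneg hD hc.le)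
        gcongr
        exacts [hF0 G, sum_nonneg fun v _ => forceMean_nonneg G B v,
          sum_compl_forceMean_le_potential G B]

variable {s : ℝ}

theorem sum_mul_excess_le (hF0 : ∀ G, 0 ≤ F G)
    (hF : ∀ G G', G.edgeSet.ncard = G'.edgeSet.ncard → AgreeOn B G G' → F G = F G')
    (hFs : ∀ G, F G ≠ 0 → Unsaturated G D s B) (hD : 0 ≤ D) (hc : 0 < c)
    (hcard : s + 2 + D + c ≤ Fintype.card V) :
    ∑ G, F G * (2 * backExcess G B + newExcess G D B) ≤
      3 * (D * s / c) * ∑ G, F G * truncPotential G D s B := by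
  by_cases hB : (#B : ℝ) < s
  swap
  · have hzero : ∀ G, F G = 0 := fun G => of_not_not fun h => hB (hFs G h).card_lt
    simp [hzero]
  have hback := sum_mul_backExcess_le hF0 hF (fun G h => (hFs G h).1) hD hc (by linarith)
  have hnew := sum_mul_newExcess_le hF0 hF hD hc (by linarith)
  have hpot : ∀ G, F G * (2 * (#B * potential G B) + potential G B ^ 2) ≤
      3 * s * (F G * truncPotential G D s B) := by
    intro G
    rcases eq_or_ne (F G) 0 with h | h
    · simp [h]
    · rw [(hFs G h).truncPotential_eq]
      have hcardB := mul_le_mul_of_nonneg_right hB.le (potential_nonneg G B)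
      have hsq := mul_le_mul_of_nonneg_right (hFs G h).2.le (potential_nonneg G B)
      linarith [mul_le_mul_of_nonneg_left (add_le_add (add_le_add hcardB hcardB) hsq) (hF0 G)]
  calc ∑ G, F G * (2 * backExcess G B + newExcess G D B)
      = 2 * ∑ G, F G * backExcess G B + ∑ G, F G * newExcess G D B := by
        simp only [mul_add, sum_add_distrib, mul_left_comm _ (2 : ℝ), ← mul_sum]
    _ ≤ D / c * ∑ G, F G * (2 * (#B * potential G B) + potential G B ^ 2) := by
        simp only [mul_add, sum_add_distrib, mul_left_comm _ (2 : ℝ), ← mul_sum]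
        linarith
    _ ≤ D / c * ∑ G, 3 * s * (F G * truncPotential G D s B) :=
        mul_le_mul_of_nonneg_left (sum_le_sum fun G _ => hpot G) (div_nonneg hD hc.le)
    _ = 3 * (D * s / c) * ∑ G, F G * truncPotential G D s B := by
        rw [← mul_sum]
        ring

variable {W : SimpleGraph V → ℝ}

theorem sum_mul_transition_pow_mul_excess_le (hW0 : ∀ G, 0 ≤ W G)
    (hW : ∀ G G', G.edgeSet.ncard = G'.edgeSet.ncard → W G = W G') (hD : 0 ≤ D) (hs : 0 ≤ s)
    (hc : 0 < c) (hcard : s + 2 + D + c ≤ Fintype.card V) (S B : Finset V) (t : ℕ) :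
    ∑ G, W G * ((transition G ^ t) S B *
        if Unsaturated G D s B then 2 * backExcess G B + newExcess G D B else 0) ≤
      3 * (D * s / c) * ∑ G, W G * ((transition G ^ t) S B * truncPotential G D s B) := by
  have hlaw : ∀ G, 0 ≤ W G * (transition G ^ t) S B := fun G =>
    mul_nonneg (hW0 G) (transition_pow_nonneg G t S B)
  set F : SimpleGraph V → ℝ := fun G =>
    if Unsaturated G D s B then W G * (transition G ^ t) S B else 0 with hFdef
  have hF : ∀ G G', G.edgeSet.ncard = G'.edgeSet.ncard → AgreeOn B G G' → F G = F G' := by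
    intro G G' hcount hagree
    simp only [hFdef, hagree.unsaturated_iff, hW G G' hcount, hagree.transition_pow_eq]
  calc ∑ G, W G * ((transition G ^ t) S B *
        if Unsaturated G D s B then 2 * backExcess G B + newExcess G D B else 0)
      = ∑ G, F G * (2 * backExcess G B + newExcess G D B) := by
        simp only [hFdef, mul_ite, ite_mul, mul_zero, zero_mul, mul_assoc]
    _ ≤ 3 * (D * s / c) * ∑ G, F G * truncPotential G D s B :=
        sum_mul_excess_le (fun G => ite_nonneg (hlaw G) le_rfl) hF
          (fun G h => of_not_not fun hsat => h (if_neg hsat)) hD hc hcard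
    _ ≤ 3 * (D * s / c) * ∑ G, W G * ((transition G ^ t) S B * truncPotential G D s B) := by
        refine mul_le_mul_of_nonneg_left (sum_le_sum fun G _ => ?_) (by positivity)
        rw [← mul_assoc]
        refine mul_le_mul_of_nonneg_right ?_ (truncPotential_nonneg hs)
        simp only [hFdef]
        split_ifs
        exacts [le_rfl, hlaw G]

theorem sum_mul_sum_transition_pow_succ_mul_truncPotential_le (hW0 : ∀ G, 0 ≤ W G)
    (hW : ∀ G G', G.edgeSet.ncard = G'.edgeSet.ncard → W G = W G') (hD : 0 ≤ D) (hs : 0 ≤ s)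
    (hc : 0 < c) (hcard : s + 2 + D + c ≤ Fintype.card V) (S : Finset V) (t : ℕ) :
    ∑ G, W G * ∑ B, (transition G ^ (t + 1)) S B * truncPotential G D s B ≤
      (4 + 3 * (D * s / c)) * ∑ G, W G * ∑ B, (transition G ^ t) S B * truncPotential G D s B :=
  calc ∑ G, W G * ∑ B, (transition G ^ (t + 1)) S B * truncPotential G D s B
      ≤ ∑ G, W G * ∑ B, (transition G ^ t) S B * (4 * truncPotential G D s B +
          if Unsaturated G D s B then 2 * backExcess G B + newExcess G D B else 0) := by
        refine sum_le_sum fun G _ => mul_le_mul_of_nonneg_left ?_ (hW0 G)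
        rw [sum_transition_pow_succ_mul]
        exact sum_le_sum fun B _ => mul_le_mul_of_nonneg_left
          (sum_transition_mul_truncPotential_le_ite G D B hs) (transition_pow_nonneg G t S B)
    _ = 4 * (∑ G, W G * ∑ B, (transition G ^ t) S B * truncPotential G D s B) +
          ∑ B, ∑ G, W G * ((transition G ^ t) S B *
            if Unsaturated G D s B then 2 * backExcess G B + newExcess G D B else 0) := by
        rw [sum_comm (s := univ (α := Finset V))]
        simp only [mul_add, mul_left_comm _ (4 : ℝ), sum_add_distrib, mul_sum]
    _ ≤ 4 * (∑ G, W G * ∑ B, (transition G ^ t) S B * truncPotential G D s B) +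
          ∑ B, 3 * (D * s / c) * ∑ G, W G * ((transition G ^ t) S B * truncPotential G D s B) :=
        add_le_add_right (sum_le_sum fun B _ =>
          sum_mul_transition_pow_mul_excess_le hW0 hW hD hs hc hcard S B t) _
    _ = (4 + 3 * (D * s / c)) *
          ∑ G, W G * ∑ B, (transition G ^ t) S B * truncPotential G D s B := by
        rw [← mul_sum, sum_comm]
        simp only [← mul_sum]
        ring

theorem sum_mul_sum_transition_pow_mul_truncPotential_le (hW0 : ∀ G, 0 ≤ W G)
    (hW : ∀ G G', G.edgeSet.ncard = G'.edgeSet.ncard → W G = W G') (hD : 0 ≤ D) (hs : 0 ≤ s)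
    (hc : 0 < c) (hcard : s + 2 + D + c ≤ Fintype.card V) (S : Finset V) (t : ℕ) :
    ∑ G, W G * ∑ B, (transition G ^ t) S B * truncPotential G D s B ≤
      (4 + 3 * (D * s / c)) ^ t * ((#S : ℝ) ^ 2 * ∑ G, W G) := by
  induction t with
  | zero =>
    rw [pow_zero, one_mul, mul_comm, sum_mul]
    refine sum_le_sum fun G _ => mul_le_mul_of_nonneg_left ?_ (hW0 G)
    simpa [Matrix.one_apply] using truncPotential_le_potential.trans (potential_le_card_sq G S)
  | succ t ih =>
    refine (sum_mul_sum_transition_pow_succ_mul_truncPotential_le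
      hW0 hW hD hs hc hcard S t).trans ?_
    rw [pow_succ', mul_assoc]
    exact mul_le_mul_of_nonneg_left ih (by positivity)

theorem probAllBlue_le (G : SimpleGraph V) (hs : 0 < s) (hcard : s ≤ Fintype.card V)
    (S : Finset V) (t : ℕ) :
    probAllBlue G S t ≤ (∑ B, (transition G ^ t) S B * truncPotential G D s B) / s +
      #{w | D < deg G w} := by
  by_cases hdeg : ∀ u, (deg G u : ℝ) ≤ D
  · have hfull : truncPotential G D s univ = s := by
      rw [truncPotential, if_pos fun u _ => hdeg u, min_eq_right]
      exact hcard.trans (card_le_potential G univ)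
    have hle : probAllBlue G S t * s ≤ ∑ B, (transition G ^ t) S B * truncPotential G D s B := by
      rw [probAllBlue_eq]
      nth_rw 1 [← hfull]
      exact single_le_sum (f := fun B => (transition G ^ t) S B * truncPotential G D s B)
        (fun B _ => mul_nonneg (transition_pow_nonneg G t S B) (truncPotential_nonneg hs.le))
        (mem_univ univ)
    exact ((le_div_iff₀ hs).2 hle).trans (le_add_of_nonneg_right (Nat.cast_nonneg _))
  · push Not at hdeg
    obtain ⟨w, hw⟩ := hdeg
    have hone : (1 : ℝ) ≤ #{w | D < deg G w} := by
      exact_mod_cast card_pos.2 ⟨w, by simpa using hw⟩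
    refine (probAllBlue_le_one G S t).trans (hone.trans (le_add_of_nonneg_left ?_))
    exact div_nonneg (sum_nonneg fun B _ => mul_nonneg (transition_pow_nonneg G t S B)
      (truncPotential_nonneg hs.le)) hs.le

theorem sum_mul_probAllBlue_le (hW0 : ∀ G, 0 ≤ W G)
    (hW : ∀ G G', G.edgeSet.ncard = G'.edgeSet.ncard → W G = W G') (hD : 0 ≤ D) (hs : 0 < s)
    (hc : 0 < c) (hcard : s + 2 + D + c ≤ Fintype.card V) (S : Finset V) (t : ℕ) :
    ∑ G, W G * probAllBlue G S t ≤
      (4 + 3 * (D * s / c)) ^ t * ((#S : ℝ) ^ 2 * ∑ G, W G) / s +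
        ∑ w, ∑ G, if D < deg G w then W G else 0 :=
  calc ∑ G, W G * probAllBlue G S t
      ≤ ∑ G, W G * ((∑ B, (transition G ^ t) S B * truncPotential G D s B) / s +
          #{w | D < deg G w}) :=
        sum_le_sum fun G _ => mul_le_mul_of_nonneg_left
          (probAllBlue_le G hs (by linarith) S t) (hW0 G)
    _ = (∑ G, W G * ∑ B, (transition G ^ t) S B * truncPotential G D s B) / s +
          ∑ w, ∑ G, if D < deg G w then W G else 0 := by
        rw [sum_comm, sum_div, ← sum_add_distrib]
        refine sum_congr rfl fun G _ => ?_
        rw [mul_add, mul_div_assoc, ← sum_filter, sum_const, nsmul_eq_mul, mul_comm (W G) (#_ : ℝ)]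
    _ ≤ (4 + 3 * (D * s / c)) ^ t * ((#S : ℝ) ^ 2 * ∑ G, W G) / s +
          ∑ w, ∑ G, if D < deg G w then W G else 0 :=
        add_le_add_left (div_le_div_of_nonneg_right
          (sum_mul_sum_transition_pow_mul_truncPotential_le hW0 hW hD hs.le hc hcard S t) hs.le) _

end Annealed

section RandomGraph

variable {n : ℕ} {p : ℝ}

theorem sum_erProb_mul_prod (n : ℕ) (p : ℝ) (a : Sym2 (Fin n) → ℝ) :
    ∑ G : SimpleGraph (Fin n), erProb n p G * ∏ e ∈ G.edgeFinset, a e =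
      ∏ e ∈ (⊤ : SimpleGraph (Fin n)).edgeFinset, (p * a e + (1 - p)) := by
  have htop : #(⊤ : SimpleGraph (Fin n)).edgeFinset = n.choose 2 := by
    convert SimpleGraph.card_edgeFinset_top_eq_card_choose_two (V := Fin n)
    exact (Fintype.card_fin n).symm
  rw [prod_add]
  refine sum_bij' (fun G _ => G.edgeFinset) (fun t _ => SimpleGraph.fromEdgeSet (t : Set _))
    (fun G _ => mem_powerset.2 (SimpleGraph.edgeFinset_mono le_top)) (fun _ _ => mem_univ _)
    (fun G _ => by simp) (fun t ht => ?_) fun G _ => ?_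
  · ext e
    simp only [SimpleGraph.mem_edgeFinset, SimpleGraph.edgeSet_fromEdgeSet]
    exact and_iff_left_of_imp fun he => SimpleGraph.not_isDiag_of_mem_edgeSet _
      (SimpleGraph.mem_edgeFinset.1 (mem_powerset.1 ht he))
  · have hcard : G.edgeSet.ncard = #G.edgeFinset := by
      rw [← SimpleGraph.coe_edgeFinset, Set.ncard_coe_finset]
    rw [prod_mul_distrib, prod_const, prod_const,
      card_sdiff_of_subset (SimpleGraph.edgeFinset_mono le_top), erProb, hcard, htop]
    ring

theorem sum_erProb (n : ℕ) (p : ℝ) : ∑ G : SimpleGraph (Fin n), erProb n p G = 1 := by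
  simpa using sum_erProb_mul_prod n p fun _ => 1

theorem erProb_nonneg (hp0 : 0 ≤ p) (hp1 : p ≤ 1) (G : SimpleGraph (Fin n)) : 0 ≤ erProb n p G :=
  mul_nonneg (pow_nonneg hp0 _) (pow_nonneg (sub_nonneg.2 hp1) _)

theorem deg_eq_degree {V : Type*} (G : SimpleGraph V) (u : V) [Fintype (G.neighborSet u)] :
    deg G u = G.degree u :=
  (Set.ncard_eq_toFinset_card' _).trans (G.card_neighborFinset_eq_degree u)

theorem prod_edgeFinset_ite_mem (G : SimpleGraph (Fin n)) (w : Fin n) (x : ℝ) :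
    ∏ e ∈ G.edgeFinset, (if w ∈ e then x else 1) = x ^ deg G w := by
  rw [← prod_filter, prod_const, ← SimpleGraph.incidenceFinset_eq_filter,
    SimpleGraph.card_incidenceFinset_eq_degree, deg_eq_degree]

theorem sum_erProb_mul_pow_deg (p : ℝ) (w : Fin n) (x : ℝ) :
    ∑ G : SimpleGraph (Fin n), erProb n p G * x ^ deg G w = (p * x + (1 - p)) ^ (n - 1) := by
  simp only [← prod_edgeFinset_ite_mem]
  have hdeg : deg (⊤ : SimpleGraph (Fin n)) w = n - 1 := by
    simp [deg_eq_degree]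
  rw [sum_erProb_mul_prod, ← hdeg, ← prod_edgeFinset_ite_mem]
  refine prod_congr (by congr!) fun e _ => ?_
  split_ifs <;> ring

/-- Chernoff's bound with the exponential moment `E[exp (deg w)] ≤ exp ((e - 1) n p)`. -/
theorem graphProb_lt_deg_le (hp0 : 0 ≤ p) (hp1 : p ≤ 1) (w : Fin n) (a : ℝ) :
    graphProb n p (fun G => 2 * (n * p) + a < deg G w) ≤ exp (-a) := by
  have hn : ((n - 1 : ℕ) : ℝ) ≤ n := Nat.cast_le.2 (Nat.sub_le n 1)
  have he : exp 1 ≤ 3 := exp_one_lt_three.le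
  calc graphProb n p (fun G => 2 * (n * p) + a < deg G w)
      ≤ ∑ G : SimpleGraph (Fin n), erProb n p G * (exp 1 ^ deg G w * exp (-(2 * (n * p) + a))) := by
        refine sum_le_sum fun G _ => ?_
        have hG := erProb_nonneg hp0 hp1 G
        split_ifs with hlt
        · refine le_mul_of_one_le_right hG ?_
          rw [← exp_nat_mul, ← exp_add]
          exact one_le_exp (by linarith)
        · positivity
    _ = (1 + p * (exp 1 - 1)) ^ (n - 1) * exp (-(2 * (n * p) + a)) := by
        simp only [← mul_assoc, ← sum_mul, sum_erProb_mul_pow_deg]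
        ring_nf
    _ ≤ exp (2 * (n * p)) * exp (-(2 * (n * p) + a)) := by
        refine mul_le_mul_of_nonneg_right ?_ (exp_nonneg _)
        have hbase : 1 + p * (exp 1 - 1) ≤ exp (2 * p) := by
          linarith [add_one_le_exp (2 * p), mul_le_mul_of_nonneg_left he hp0]
        have hbase0 : 0 ≤ 1 + p * (exp 1 - 1) := by
          linarith [mul_nonneg hp0 (sub_nonneg.2 (one_le_exp zero_le_one))]
        refine (pow_le_pow_left₀ hbase0 hbase _).trans ?_
        rw [← exp_nat_mul, exp_le_exp]
        linarith [mul_le_mul_of_nonneg_right hn hp0]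
    _ = exp (-a) := by
        rw [← exp_add]
        ring_nf

theorem prPZFwithin_nonneg (hp0 : 0 ≤ p) (hp1 : p ≤ 1) (v : Fin n) (ℓ : ℕ) :
    0 ≤ prPZFwithin n p v ℓ :=
  sum_nonneg fun G _ => mul_nonneg (erProb_nonneg hp0 hp1 G) (probAllBlue_nonneg G {v} ℓ)

theorem prPZFwithin_mul_log_le (hp0 : 0 ≤ p) (hp1 : p ≤ 1) (v : Fin n) (ℓ : ℕ) :
    prPZFwithin n p v ℓ * log (1 + n) ≤ 2 ^ ℓ * log 2 := by
  calc prPZFwithin n p v ℓ * log (1 + n)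
      = ∑ G, erProb n p G * (probAllBlue G {v} ℓ * log (1 + n)) := by
        simp only [prPZFwithin, sum_mul, mul_assoc]
    _ ≤ ∑ G, erProb n p G * (2 ^ ℓ * log 2) := by
        refine sum_le_sum fun G _ => mul_le_mul_of_nonneg_left ?_ (erProb_nonneg hp0 hp1 G)
        simpa [one_add_one_eq_two] using probAllBlue_mul_log_le G {v} ℓ
    _ = 2 ^ ℓ * log 2 := by rw [← sum_mul, sum_erProb, one_mul]

theorem prPZFwithin_le_two_rpow_neg (hp0 : 0 ≤ p) (hp1 : p ≤ 1) (hn : 2 ≤ n) (v : Fin n) {ℓ : ℕ}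
    {r : ℝ} (hℓ : ℓ ≤ logb 2 (logb 2 n) - r) : prPZFwithin n p v ℓ ≤ 2 ^ (-r) := by
  have hn' : (2 : ℝ) ≤ n := by exact_mod_cast hn
  have hlog : 0 < log n := log_pos (by linarith)
  have hpow : (2 : ℝ) ^ ℓ * log 2 ≤ 2 ^ (-r) * log n :=
    calc (2 : ℝ) ^ ℓ * log 2
        ≤ 2 ^ (logb 2 (logb 2 n) - r) * log 2 := by
          rw [← rpow_natCast]
          exact mul_le_mul_of_nonneg_right (rpow_le_rpow_of_exponent_le one_le_two hℓ)
            (log_nonneg one_le_two)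
      _ = 2 ^ (-r) * log n := by
          rw [sub_eq_add_neg, rpow_add two_pos, rpow_logb two_pos (by norm_num)
            (logb_pos one_lt_two (by linarith)), mul_comm (logb 2 (n : ℝ)), mul_assoc, logb,
            div_mul_cancel₀ _ (log_pos one_lt_two).ne']
  refine le_of_mul_le_mul_right ?_ hlog
  calc prPZFwithin n p v ℓ * log n
      ≤ prPZFwithin n p v ℓ * log (1 + n) := by
        refine mul_le_mul_of_nonneg_left ?_ (prPZFwithin_nonneg hp0 hp1 v ℓ)
        exact log_le_log (by linarith) (by linarith)
    _ ≤ 2 ^ (-r) * log n := (prPZFwithin_mul_log_le hp0 hp1 v ℓ).trans hpow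

theorem sum_graphProb_lt_deg_le (hp0 : 0 ≤ p) (hp1 : p ≤ 1) (hn : 0 < n) {D : ℝ}
    (hD : 2 * (n * p) + 2 * log n ≤ D) :
    ∑ w, graphProb n p (fun G => D < deg G w) ≤ 1 / n := by
  have hn' : (0 : ℝ) < n := Nat.cast_pos.2 hn
  calc ∑ w, graphProb n p (fun G => D < deg G w)
      ≤ ∑ _w : Fin n, exp (-(D - 2 * (n * p))) := by
        refine sum_le_sum fun w _ => ?_
        simpa using graphProb_lt_deg_le hp0 hp1 w (D - 2 * (n * p))
    _ ≤ ∑ _w : Fin n, exp (-(2 * log n)) :=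
        sum_le_sum fun _ _ => exp_le_exp.2 (by linarith)
    _ = 1 / n := by
        rw [exp_neg, two_mul, exp_add, exp_log hn', sum_const, card_univ, Fintype.card_fin,
          nsmul_eq_mul]
        field_simp

theorem div_add_one_pow_le_exp {a M : ℝ} (ha : 0 ≤ a) (hM : 0 < M) {ℓ : ℕ} (hℓ : ℓ ≤ M) :
    (a / M + 1) ^ ℓ ≤ exp a :=
  calc (a / M + 1) ^ ℓ
      ≤ exp (a / M) ^ ℓ := pow_le_pow_left₀ (by positivity) (add_one_le_exp _) ℓ
    _ ≤ exp a := by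
        rw [← exp_nat_mul, exp_le_exp, mul_div_left_comm]
        exact mul_le_of_le_one_right ha (div_le_one_of_le₀ hℓ hM.le)

theorem prPZFwithin_le_exp_mul (hp0 : 0 < p) {κ M : ℝ} (hκ : 0 ≤ κ) (hlog : log n ≤ κ * (n * p))
    (hκp : 8 * (1 + κ) * p ≤ 1) (hnp : 8 ≤ n * p) (hM : 1 ≤ M) (v : Fin n) {ℓ : ℕ} (hℓ : ℓ ≤ M) :
    prPZFwithin n p v ℓ ≤ exp (3 * (1 + κ)) * 4 ^ ℓ * (p * M) + 1 / n := by
  have hM0 : 0 < M := one_pos.trans_le hM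
  have hp8 : 8 * p ≤ 1 := by linarith [mul_nonneg hκ hp0.le]
  have hn : (0 : ℝ) < n := Nat.cast_pos.2 v.pos
  have hs : (p * M)⁻¹ ≤ n / 8 := by
    rw [inv_le_comm₀ (mul_pos hp0 hM0) (by positivity), inv_div, div_le_iff₀ hn]
    linarith [mul_le_mul_of_nonneg_left hM (mul_pos hn hp0).le]
  have hcard : (p * M)⁻¹ + 2 + 2 * (1 + κ) * (n * p) + n / 2 ≤ Fintype.card (Fin n) := by
    rw [Fintype.card_fin]
    linarith [mul_le_mul_of_nonneg_left hκp hn.le, mul_le_mul_of_nonneg_left hp8 hn.le]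
  have hbound := sum_mul_probAllBlue_le (erProb_nonneg hp0.le (by linarith))
    (fun G G' h => by rw [erProb, erProb, h]) (D := 2 * (1 + κ) * (n * p)) (by positivity)
    (inv_pos.2 (mul_pos hp0 hM0)) (half_pos hn) hcard {v} ℓ
  rw [sum_erProb, card_singleton, Nat.cast_one, one_pow, mul_one, mul_one, div_inv_eq_mul] at hbound
  refine hbound.trans (add_le_add (mul_le_mul_of_nonneg_right ?_ (by positivity)) ?_)
  · have hratio : 4 + 3 * (2 * (1 + κ) * (n * p) * (p * M)⁻¹ / (n / 2)) =
        4 * (3 * (1 + κ) / M + 1) := by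
      field_simp
      ring
    rw [hratio, mul_pow, mul_comm]
    exact mul_le_mul_of_nonneg_right (div_add_one_pow_le_exp (by positivity) hM0 hℓ) (by positivity)
  · exact sum_graphProb_lt_deg_le hp0.le (by linarith) v.pos (by linarith)

theorem prPZFwithin_le_of_le_logb_four (hp0 : 0 < p) {C M r : ℝ} (hC : 1 ≤ C)
    (hdense : log n / (p * n) ≤ C) (hlog : 8 * C ≤ log n) (hCM : logb 4 (8 * (1 + C)) ≤ M)
    (hM : 1 ≤ M) (hMp : M = logb 4 (1 / p)) (hr : 0 ≤ r) (v : Fin n) {ℓ : ℕ} (hℓ : ℓ ≤ M - r) :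
    prPZFwithin n p v ℓ ≤ exp (3 * (1 + C)) * (M * 2 ^ (-r)) + 1 / n := by
  have hn : (0 : ℝ) < n := Nat.cast_pos.2 v.pos
  have hlogle : log n ≤ C * (n * p) := by
    rwa [div_le_iff₀ (mul_pos hp0 hn), mul_comm p] at hdense
  have hfour : (4 : ℝ) ^ M = 1 / p := by
    rw [hMp, rpow_logb (by norm_num) (by norm_num) (one_div_pos.2 hp0)]
  have hCp : 8 * (1 + C) * p ≤ 1 := by
    rw [← le_div_iff₀ hp0, ← hfour]
    exact (logb_le_iff_le_rpow (by norm_num) (by linarith)).1 hCM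
  have hnp : 8 ≤ n * p := by
    refine le_of_mul_le_mul_left ?_ (one_pos.trans_le hC)
    linarith
  have hpow : (4 : ℝ) ^ ℓ * p ≤ 2 ^ (-r) :=
    calc (4 : ℝ) ^ ℓ * p
        ≤ 4 ^ (M - r) * p := by
          rw [← rpow_natCast]
          exact mul_le_mul_of_nonneg_right
            (rpow_le_rpow_of_exponent_le (by norm_num) hℓ) hp0.le
      _ = 4 ^ (-r) := by
          rw [sub_eq_add_neg, rpow_add (by norm_num), hfour]
          field_simp
      _ ≤ 2 ^ (-r) := rpow_le_rpow_of_nonpos two_pos (by norm_num) (neg_nonpos.2 hr)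
  refine (prPZFwithin_le_exp_mul hp0 (by linarith) hlogle hCp hnp hM v (by linarith)).trans ?_
  rw [mul_assoc, ← mul_assoc (4 ^ ℓ), mul_comm M]
  gcongr

theorem prPZFwithin_le (hp0 : 0 ≤ p) (hp1 : p ≤ 1) {C M r : ℝ} (hC : 1 ≤ C)
    (hdense : log n / (p * n) ≤ C) (hlog : 8 * C ≤ log n) (hCM : logb 4 (8 * (1 + C)) ≤ M)
    (hM : 1 ≤ M) (hMp : M = max (logb 2 (logb 2 n)) (logb 4 (1 / p))) (hr : 0 ≤ r) (v : Fin n)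
    {ℓ : ℕ} (hℓ : ℓ ≤ M - r) :
    prPZFwithin n p v ℓ ≤ exp (3 * (1 + C)) * (M * 2 ^ (-r)) + 1 / n := by
  rcases max_choice (logb 2 (logb 2 n)) (logb 4 (1 / p)) with hmax | hmax <;> rw [hmax] at hMp
  · have hn : 2 ≤ n := by
      by_contra! hlt
      interval_cases n <;> norm_num at hlog <;> linarith
    have hexpM : 1 ≤ exp (3 * (1 + C)) * M :=
      one_le_mul_of_one_le_of_one_le (one_le_exp (by linarith)) hM
    calc prPZFwithin n p v ℓ
        ≤ 2 ^ (-r) := prPZFwithin_le_two_rpow_neg hp0 hp1 hn v (hMp ▸ hℓ)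
      _ ≤ exp (3 * (1 + C)) * (M * 2 ^ (-r)) := by
        rw [← mul_assoc]
        exact le_mul_of_one_le_left (by positivity) hexpM
      _ ≤ exp (3 * (1 + C)) * (M * 2 ^ (-r)) + 1 / n := le_add_of_nonneg_right (by positivity)
  · rcases hp0.eq_or_lt with rfl | hp0
    · norm_num [hMp] at hM
    · exact prPZFwithin_le_of_le_logb_four hp0 hC hdense hlog hCM hM hMp hr v hℓ

end RandomGraph

section Asymptotics

theorem natCast_ceil_mul_sub_one_le {x : ℝ} (hx : 1 ≤ x) :
    ((⌈(1 - (√x)⁻¹) * x⌉₊ - 1 : ℕ) : ℝ) ≤ x - √x := by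
  have hmul : (1 - (√x)⁻¹) * x = x - √x := by
    rw [sub_mul, one_mul, inv_mul_eq_div, div_sqrt]
  rw [hmul]
  rcases Nat.eq_zero_or_pos ⌈x - √x⌉₊ with h | h
  · simpa [h] using sqrt_le_iff.2 ⟨by linarith, le_self_pow₀ hx two_ne_zero⟩
  · exact (Nat.lt_ceil.1 (Nat.sub_one_lt_of_lt h)).le

theorem tendsto_mul_two_rpow_neg_sqrt :
    Tendsto (fun x : ℝ => x * 2 ^ (-√x)) atTop (nhds 0) := by
  have h := (tendsto_rpow_mul_exp_neg_mul_atTop_nhds_zero 2 (log 2) (log_pos one_lt_two)).comp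
    tendsto_sqrt_atTop
  refine h.congr' ?_
  filter_upwards [eventually_ge_atTop 0] with x hx
  rw [Function.comp_apply, rpow_two, sq_sqrt hx, rpow_def_of_pos two_pos, neg_mul, mul_neg]

theorem tendsto_logb_two_logb_two_natCast_add_one :
    Tendsto (fun n : ℕ => logb 2 (logb 2 ((n : ℝ) + 1))) atTop atTop :=
  (tendsto_logb_atTop one_lt_two).comp <| (tendsto_logb_atTop one_lt_two).comp <|
    tendsto_atTop_add_const_right _ _ tendsto_natCast_atTop_atTop

theorem tendsto_mul_mul_two_rpow_neg_sqrt_add_one_div {M : ℕ → ℝ} (hM : Tendsto M atTop atTop)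
    (c : ℝ) :
    Tendsto (fun n => c * (M n * 2 ^ (-√(M n))) + 1 / ((n + 1 : ℕ) : ℝ)) atTop (nhds 0) := by
  simpa using ((tendsto_mul_two_rpow_neg_sqrt.comp hM).const_mul c).add
    tendsto_one_div_add_atTop_nhds_zero_nat

end Asymptotics

end PZF

theorem pzf_lower_bound_general
    (p : ℕ → ℝ) (hp : ∀ n, 0 ≤ p n ∧ p n ≤ 1)
    (hdense : IsBoundedUnder (· ≤ ·) atTop (fun n : ℕ => Real.log n / (p n * n)))
    (v : (n : ℕ) → Fin (n + 1)) :
    ∃ e : ℕ → ℝ,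
      Tendsto e atTop (nhds 0) ∧
      Tendsto
        (fun n => PZF.prPZFwithin (n + 1) (p (n + 1)) (v n)
          (⌈(1 + e n) *
              max (Real.logb 2 (Real.logb 2 ((n : ℝ) + 1)))
                (Real.logb 4 (1 / p (n + 1)))⌉₊ - 1))
        atTop (nhds 0) := by
  set M : ℕ → ℝ := fun n =>
    max (logb 2 (logb 2 ((n : ℝ) + 1))) (logb 4 (1 / p (n + 1))) with hM
  have hMtop : Tendsto M atTop atTop :=
    tendsto_atTop_mono (fun n => le_max_left _ _) PZF.tendsto_logb_two_logb_two_natCast_add_one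
  have hlogtop : Tendsto (fun n : ℕ => log ((n + 1 : ℕ) : ℝ)) atTop atTop :=
    tendsto_log_atTop.comp (tendsto_natCast_atTop_atTop.comp (tendsto_add_atTop_nat 1))
  obtain ⟨C, hC⟩ := hdense.eventually_le
  refine ⟨fun n => -(√(M n))⁻¹, ?_, ?_⟩
  · simpa using (tendsto_inv_atTop_zero.comp (tendsto_sqrt_atTop.comp hMtop)).neg
  refine squeeze_zero' (.of_forall fun n => PZF.prPZFwithin_nonneg (hp _).1 (hp _).2 _ _) ?_
    (PZF.tendsto_mul_mul_two_rpow_neg_sqrt_add_one_div hMtop (exp (3 * (1 + max C 1))))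
  filter_upwards [hMtop.eventually_ge_atTop 1,
    hMtop.eventually_ge_atTop (logb 4 (8 * (1 + max C 1))),
    (tendsto_add_atTop_nat 1).eventually hC,
    hlogtop.eventually_ge_atTop (8 * max C 1)] with n hM1 hCM hratio hlog
  exact PZF.prPZFwithin_le (hp _).1 (hp _).2 (le_max_right C 1) (hratio.trans (le_max_left C 1))
    hlog hCM hM1 (by simp [hM]) (sqrt_nonneg _) _ (PZF.natCast_ceil_mul_sub_one_le hM1)

/-- If `p n * n ≫ log n`, then for each vertex `v` of `G(n,p)`, a.a.s.
`pt_pzf(G(n,p), v) ≥ (1 + o(1)) max (log₂ log₂ n) (log₄ (1/p))`.  The event `pt ≥ b` (for a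
real bound `b > 0`) is the complement of the event that all vertices are blue after
`⌈b⌉₊ - 1` rounds, so a.a.s. `pt ≥ b` is expressed by the probability of the latter event
tending to `0`. -/
theorem pzf_lower_bound
    (p : ℕ → ℝ) (hp : ∀ n, 0 ≤ p n ∧ p n ≤ 1)
    (hdense : Tendsto (fun n : ℕ => Real.log n / (p n * n)) atTop (nhds 0))
    (v : (n : ℕ) → Fin (n + 1)) :
    ∃ e : ℕ → ℝ,
      Tendsto e atTop (nhds 0) ∧
      Tendsto
        (fun n => PZF.prPZFwithin (n + 1) (p (n + 1)) (v n)
          (⌈(1 + e n) *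
              max (Real.logb 2 (Real.logb 2 ((n : ℝ) + 1)))
                (Real.logb 4 (1 / p (n + 1)))⌉₊ - 1))
        atTop (nhds 0) :=
  pzf_lower_bound_general p hp hdense.isBoundedUnder_le v
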